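/- Let λ ≥ 2 and let θ ∈ S¹ be λ-renormalizable, with λ-shrinking sequence ⟨g_n⟩ and sign sequence ⟨s_n⟩. Let v ∈ ℝ² be a nonzero vector, and let θ·v denote the Euclidean dot product. Then: (a) if θ·v > 0, there is an i ≥ 0 such that for every critical time n > i, ρ_λ(γ(g_n))v ∈ Q_{s_n}; (b) if θ·v < 0, there is an i ≥ 0 such that for every critical time n > i, −ρ_λ(γ(g_n))v ∈ Q_{s_n}; (c) if θ·v = 0, then there is a fixed choice of sign ε ∈ {+1, −1} such that ρ_λ(γ(g_n))v ∈ Q_{r^{ε}(s_n)} for all n ≥ 0. -/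

import Mathlib

noncomputable section

abbrev F2 := FreeGroup Bool

def gh : F2 := FreeGroup.of true
def gv : F2 := FreeGroup.of false

def hmat (l : ℝ) : Matrix.SpecialLinearGroup (Fin 2) ℝ :=
  ⟨!![1, l; 0, 1], by norm_num [Matrix.det_fin_two_of]⟩

def vmat (l : ℝ) : Matrix.SpecialLinearGroup (Fin 2) ℝ :=
  ⟨!![1, 0; l, 1], by norm_num [Matrix.det_fin_two_of]⟩

def rho (l : ℝ) : F2 →* Matrix.SpecialLinearGroup (Fin 2) ℝ :=
  FreeGroup.lift fun b => if b then hmat l else vmat l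

def act (l : ℝ) (g : F2) (x : Fin 2 → ℝ) : Fin 2 → ℝ :=
  (rho l g).val.mulVec x

def nrm (x : Fin 2 → ℝ) : ℝ := Real.sqrt (x 0 ^ 2 + x 1 ^ 2)

def Circ : Set (Fin 2 → ℝ) := {x | nrm x = 1}

def gens : Set F2 := {gh, gv, gh⁻¹, gv⁻¹}

def ShrinkSet (l : ℝ) (g : F2) : Set (Fin 2 → ℝ) :=
  {x | x ∈ Circ ∧ nrm (act l g x) < 1}

def ExpSet (l : ℝ) (g : F2) : Set (Fin 2 → ℝ) :=
  {x | x ∈ Circ ∧ 1 < nrm (act l g x)}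

def IsGeodesicRay (g : ℕ → F2) : Prop :=
  g 0 = 1 ∧ (∀ n, g (n + 1) * (g n)⁻¹ ∈ gens) ∧ ∀ n, g (n + 2) * (g n)⁻¹ ≠ 1

def IsGeodesicSegment (g : ℕ → F2) (N : ℕ) : Prop :=
  g 0 = 1 ∧ (∀ n, n + 1 ≤ N → g (n + 1) * (g n)⁻¹ ∈ gens) ∧
    ∀ n, n + 2 ≤ N → g (n + 2) * (g n)⁻¹ ≠ 1

def IsShrinkingSeq (l : ℝ) (g : ℕ → F2) (θ : Fin 2 → ℝ) : Prop :=
  ∀ ε : ℝ, 0 < ε → ∃ i : ℕ, nrm (act l (g i) θ) < ε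

def Shrinkable (l : ℝ) (θ : Fin 2 → ℝ) : Prop :=
  ∀ ε : ℝ, 0 < ε → ∃ g : F2, nrm (act l g θ) < ε

def Renormalizable (l : ℝ) (θ : Fin 2 → ℝ) : Prop :=
  Shrinkable l θ ∧ ∀ k : F2, ∀ c : ℝ, act l (k * (gh * gv⁻¹) * k⁻¹) θ ≠ c • θ

abbrev SP := Bool × Bool

def Quad (s : SP) : Set (Fin 2 → ℝ) :=
  {x | (if s.1 then 0 < x 0 else x 0 < 0) ∧ (if s.2 then 0 < x 1 else x 1 < 0)}

def letterSigma : Bool × Bool → SP → SP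
  | (true, true), s => (s.2, s.2)
  | (false, true), s => (s.1, s.1)
  | (true, false), s => (!s.2, s.2)
  | (false, false), s => (s.1, !s.1)

def SigmaAct (g : F2) : SP → SP :=
  (FreeGroup.toWord g).foldr (fun w acc => letterSigma w ∘ acc) id

def gammaAut : F2 →* F2 := FreeGroup.lift fun b => if b then gv⁻¹ else gh⁻¹

def rPerm (s : SP) : SP := (!s.2, s.1)

def rPermInv (s : SP) : SP := (s.2, !s.1)

def shiftRay (g : ℕ → F2) : ℕ → F2 := fun n => g (n + 1) * (g 1)⁻¹

def TailEquiv (g g' : ℕ → F2) : Prop :=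
  ∃ m n : ℕ, shiftRay^[m] g = shiftRay^[n] g'

def seqPow (a : F2) : ℕ → F2 := fun n => a ^ n

def seqPer (a b : F2) : ℕ → F2 := fun n =>
  if n % 2 = 0 then (b * a) ^ (n / 2) else a * (b * a) ^ (n / 2)

def Cond1 (g : ℕ → F2) : Prop :=
  ¬ TailEquiv g (seqPow gh) ∧ ¬ TailEquiv g (seqPow gh⁻¹) ∧
    ¬ TailEquiv g (seqPow gv) ∧ ¬ TailEquiv g (seqPow gv⁻¹)

def Cond2 (g : ℕ → F2) : Prop :=
  ¬ TailEquiv g (seqPer gh gv⁻¹) ∧ ¬ TailEquiv g (seqPer gh⁻¹ gv)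

def adjSum {V : Type} (G : SimpleGraph V) (f : V → ℝ) (v : V) : ℝ :=
  ∑ᶠ w ∈ G.neighborSet v, f w

def BoundedValance {V : Type} (G : SimpleGraph V) : Prop :=
  ∃ D : ℕ, ∀ v, (G.neighborSet v).Finite ∧ (G.neighborSet v).ncard ≤ D

def BipartWith {V : Type} (G : SimpleGraph V) (A : Set V) : Prop :=
  ∀ v w, G.Adj v w → (v ∈ A ↔ w ∉ A)

def Hop {V : Type} (G : SimpleGraph V) (A : Set V) (k : ℤ) (f : V → ℝ) : V → ℝ :=
  fun v => f v + (k : ℝ) * Set.indicator A (adjSum G f) v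

def Vop {V : Type} (G : SimpleGraph V) (A : Set V) (k : ℤ) (f : V → ℝ) : V → ℝ :=
  fun v => f v + (k : ℝ) * Set.indicator Aᶜ (adjSum G f) v

def QuadV {V : Type} (A : Set V) (s : SP) : Set (V → ℝ) :=
  {f | (∀ v ∈ A, f v = 0 ∨ (if s.1 then 0 < f v else f v < 0)) ∧
       ∀ v, v ∉ A → f v = 0 ∨ (if s.2 then 0 < f v else f v < 0)}

def valance {V : Type} (G : SimpleGraph V) (v : V) : ℕ := (G.neighborSet v).ncard

def evec {V : Type} (v : V) : V → ℝ := Set.indicator {v} 1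

def InSpoke {V : Type} (G : SimpleGraph V) (x : V) : Prop :=
  ∃ k : ℕ, 2 ≤ k ∧ ∃ c : ℕ → V,
    (∀ i j, 1 ≤ i → i ≤ k → 1 ≤ j → j ≤ k → c i = c j → i = j) ∧
    valance G (c 1) = 1 ∧
    (∀ i, 2 ≤ i → i ≤ k - 1 →
      valance G (c i) = 2 ∧ G.Adj (c i) (c (i - 1)) ∧ G.Adj (c i) (c (i + 1))) ∧
    ∃ i, 1 ≤ i ∧ i ≤ k ∧ x = c i

/-!
The automorphism `γ` is conjugation by the quarter turn `R` under `ρ_l`, so `ρ_l(γ(g))` is the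
inverse transpose of `ρ_l(g)`. When `θ · u = 0`, the vector `u` is a multiple of `R θ` and its
images are the same multiple of `R (ρ_l(g_n) θ)`.

When `θ · u > 0`, write `w_n = ρ_l(g_n) θ`. Because `|l| ≥ 2`, a step of a reduced word that fails
to shorten the vector is followed only by steps that fail to shorten it, so every step shortens
`w_n`. The lines `x = 0`, `y = 0`, `x = y`, `x = -y` cut the plane into eight chambers; along the
word the pullbacks `ρ_l(g_n)⁻¹ C_n` of the closed chamber `C_n` of `w_n` are nested, and the steps
do not lengthen vectors that stay in the chambers. At a critical time the whole quadrant of `w_n`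
pulls back into the chamber of `w_{n-1}`, so any `z` in it is the image of some `y` in the chamber
of `θ` with `‖z‖ ≤ ‖y‖`. Then `det(θ, y) = det(w_n, z)` is at most `‖w_n‖ ‖y‖`: the direction of
`y` tends to that of `θ`, and `u · y > 0`, that is `ρ_l(γ(g_n)) u · z > 0`, once `w_n` is small.
-/

open Filter Topology
open scoped Matrix

/-! ### Plane geometry -/

/-- The rotation `R` of the plane by a quarter turn; `rot x ⬝ᵥ y` is the determinant of `(x, y)`. -/
def rot (x : Fin 2 → ℝ) : Fin 2 → ℝ := ![-x 1, x 0]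

/-- The closed Weyl chamber (for the symmetry group of the square) that contains `w`: the vectors
whose coordinates have the same signs as those of `w` and are ordered alike in absolute value.
Zero products impose no condition, so this is the usual chamber only for `w` off the four
mirrors. -/
def chamber (w : Fin 2 → ℝ) : Set (Fin 2 → ℝ) :=
  {z | (∀ k, 0 ≤ w k * z k) ∧ 0 ≤ (w 0 ^ 2 - w 1 ^ 2) * (z 0 ^ 2 - z 1 ^ 2)}

theorem nrm_eq_sqrt_dotProduct (x : Fin 2 → ℝ) : nrm x = √(x ⬝ᵥ x) := by
  simp only [nrm, Matrix.vec2_dotProduct, sq]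

theorem dotProduct_self_nonneg {ι : Type*} [Fintype ι] (x : ι → ℝ) : 0 ≤ x ⬝ᵥ x := by
  simpa only [star_trivial] using dotProduct_self_star_nonneg x

theorem dotProduct_self_pos {ι : Type*} [Fintype ι] {x : ι → ℝ} (hx : x ≠ 0) : 0 < x ⬝ᵥ x := by
  simpa only [star_trivial] using Matrix.dotProduct_self_star_pos_iff.2 hx

theorem sq_nrm (x : Fin 2 → ℝ) : nrm x ^ 2 = x ⬝ᵥ x := by
  rw [nrm_eq_sqrt_dotProduct, Real.sq_sqrt (dotProduct_self_nonneg x)]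

theorem dotProduct_self_eq_sq_add_sq (i : Fin 2) (w : Fin 2 → ℝ) :
    w ⬝ᵥ w = w i ^ 2 + w (i + 1) ^ 2 := by
  fin_cases i <;> simp [sq, add_comm]

theorem sq_dotProduct_add_sq_rot_dotProduct (x y : Fin 2 → ℝ) :
    (x ⬝ᵥ y) ^ 2 + (rot x ⬝ᵥ y) ^ 2 = (x ⬝ᵥ x) * (y ⬝ᵥ y) := by
  simp only [Matrix.vec2_dotProduct, rot, Matrix.cons_val_zero, Matrix.cons_val_one]
  ring

theorem sq_rot_dotProduct_le (x y : Fin 2 → ℝ) : (rot x ⬝ᵥ y) ^ 2 ≤ (x ⬝ᵥ x) * (y ⬝ᵥ y) := by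
  linarith [sq_dotProduct_add_sq_rot_dotProduct x y, sq_nonneg (x ⬝ᵥ y)]

theorem dotProduct_self_mul_dotProduct (x u y : Fin 2 → ℝ) :
    (x ⬝ᵥ x) * (u ⬝ᵥ y) = (x ⬝ᵥ u) * (x ⬝ᵥ y) + (rot x ⬝ᵥ u) * (rot x ⬝ᵥ y) := by
  simp only [Matrix.vec2_dotProduct, rot, Matrix.cons_val_zero, Matrix.cons_val_one]
  ring

theorem exists_smul_rot_eq {x u : Fin 2 → ℝ} (hx : x ≠ 0) (h : x ⬝ᵥ u = 0) :
    ∃ c : ℝ, c • rot x = u := by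
  have hxx : x ⬝ᵥ x ≠ 0 := (dotProduct_self_pos hx).ne'
  refine ⟨(rot x ⬝ᵥ u) / (x ⬝ᵥ x), ?_⟩
  ext k
  rw [Pi.smul_apply, smul_eq_mul, div_mul_eq_mul_div, div_eq_iff hxx]
  rw [Matrix.vec2_dotProduct] at h
  fin_cases k <;> simp only [Matrix.vec2_dotProduct, rot, Fin.zero_eta, Fin.mk_one,
    Matrix.cons_val_zero, Matrix.cons_val_one]
  · linear_combination -x 0 * h
  · linear_combination -x 1 * h

theorem rot_mulVec_dotProduct_mulVec (A : Matrix.SpecialLinearGroup (Fin 2) ℝ) (x y : Fin 2 → ℝ) :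
    rot (A.val *ᵥ x) ⬝ᵥ (A.val *ᵥ y) = rot x ⬝ᵥ y := by
  have hdet := A.det_coe
  rw [Matrix.det_fin_two] at hdet
  simp only [Matrix.vec2_dotProduct, rot, Matrix.cons_val_zero, Matrix.cons_val_one,
    Matrix.mulVec]
  linear_combination (x 0 * y 1 - x 1 * y 0) * hdet

theorem mem_chamber_iff (i : Fin 2) {w z : Fin 2 → ℝ} :
    z ∈ chamber w ↔ 0 ≤ w i * z i ∧ 0 ≤ w (i + 1) * z (i + 1) ∧
      0 ≤ (w i ^ 2 - w (i + 1) ^ 2) * (z i ^ 2 - z (i + 1) ^ 2) := by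
  fin_cases i
  · simp [chamber, Fin.forall_fin_two, and_assoc]
  · simp only [chamber, Fin.forall_fin_two, Set.mem_ofPred_eq, Fin.mk_one, Fin.isValue,
      show (1 : Fin 2) + 1 = 0 from rfl, ← neg_sub (w 0 ^ 2), ← neg_sub (z 0 ^ 2), neg_mul_neg]
    tauto

theorem abs_le_abs_of_mem_chamber {i : Fin 2} {w z : Fin 2 → ℝ} (hz : z ∈ chamber w)
    (hw : |w i| < |w (i + 1)|) : |z i| ≤ |z (i + 1)| := by
  have hprod := ((mem_chamber_iff i).1 hz).2.2
  have hsq := sq_lt_sq.2 hw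
  exact sq_le_sq.1 (by nlinarith)

/-- Vectors of a common chamber make an angle of at most `π / 4`. -/
theorem dotProduct_self_mul_le_of_mem_chamber {w z : Fin 2 → ℝ} (hz : z ∈ chamber w) :
    (w ⬝ᵥ w) * (z ⬝ᵥ z) ≤ 2 * (w ⬝ᵥ z) ^ 2 := by
  obtain ⟨hsign, hord⟩ := hz
  have hcross := mul_nonneg (hsign 0) (hsign 1)
  simp only [Matrix.vec2_dotProduct]
  linarith

theorem dotProduct_nonneg_of_mem_chamber {w z : Fin 2 → ℝ} (hz : z ∈ chamber w) : 0 ≤ w ⬝ᵥ z :=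
  Finset.sum_nonneg fun k _ => hz.1 k

/-- Expand `u` in the orthogonal basis `(x, rot x)`: the determinant hypotheses make the second
coordinate of `y` too small to compensate `x ⬝ᵥ u`. -/
theorem dotProduct_pos_of_mem_chamber {x y u w z : Fin 2 → ℝ} (hy : y ∈ chamber x)
    (hy0 : y ≠ 0) (hdet : rot w ⬝ᵥ z = rot x ⬝ᵥ y) (hzy : z ⬝ᵥ z ≤ y ⬝ᵥ y) (hxu : 0 < x ⬝ᵥ u)
    (hsmall : 2 * (u ⬝ᵥ u) * (w ⬝ᵥ w) < (x ⬝ᵥ u) ^ 2) : 0 < u ⬝ᵥ y := by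
  have hxx : 0 < x ⬝ᵥ x :=
    dotProduct_self_pos fun h => hxu.ne' (by rw [h, zero_dotProduct])
  have hyy : 0 < y ⬝ᵥ y := dotProduct_self_pos hy0
  have hsq : ((rot x ⬝ᵥ u) * (rot x ⬝ᵥ y)) ^ 2 < ((x ⬝ᵥ u) * (x ⬝ᵥ y)) ^ 2 := by
    have hrot_u := sq_rot_dotProduct_le x u
    have hrot_y : (rot x ⬝ᵥ y) ^ 2 ≤ (w ⬝ᵥ w) * (y ⬝ᵥ y) := by
      rw [← hdet]
      exact (sq_rot_dotProduct_le w z).trans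
        (mul_le_mul_of_nonneg_left hzy (dotProduct_self_nonneg w))
    have hxxuu := mul_nonneg hxx.le (dotProduct_self_nonneg u)
    have hangle := dotProduct_self_mul_le_of_mem_chamber hy
    calc ((rot x ⬝ᵥ u) * (rot x ⬝ᵥ y)) ^ 2
        = (rot x ⬝ᵥ u) ^ 2 * (rot x ⬝ᵥ y) ^ 2 := mul_pow _ _ _
      _ ≤ ((x ⬝ᵥ x) * (u ⬝ᵥ u)) * ((w ⬝ᵥ w) * (y ⬝ᵥ y)) := by gcongr
      _ = (2 * (u ⬝ᵥ u) * (w ⬝ᵥ w)) * ((x ⬝ᵥ x) * (y ⬝ᵥ y)) / 2 := by ring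
      _ < (x ⬝ᵥ u) ^ 2 * ((x ⬝ᵥ x) * (y ⬝ᵥ y)) / 2 := by gcongr
      _ ≤ (x ⬝ᵥ u) ^ 2 * (2 * (x ⬝ᵥ y) ^ 2) / 2 := by gcongr
      _ = ((x ⬝ᵥ u) * (x ⬝ᵥ y)) ^ 2 := by ring
  have hbound := (abs_lt.1 (abs_lt_of_sq_lt_sq hsq
    (mul_nonneg hxu.le (dotProduct_nonneg_of_mem_chamber hy)))).1
  refine pos_of_mul_pos_right ?_ hxx.le
  rw [dotProduct_self_mul_dotProduct]
  linarith

theorem forall_ne_zero_of_mem_quad {s : SP} {w : Fin 2 → ℝ} (hw : w ∈ Quad s) (k : Fin 2) :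
    w k ≠ 0 := by
  rcases s with ⟨_ | _, _ | _⟩ <;> fin_cases k <;> simp_all [Quad, ne_of_gt, ne_of_lt]

theorem mem_quad_iff_forall_mul_pos {s : SP} {w z : Fin 2 → ℝ} (hw : w ∈ Quad s) :
    z ∈ Quad s ↔ ∀ k, 0 < w k * z k := by
  rcases s with ⟨_ | _, _ | _⟩ <;>
    simp_all [Quad, Fin.forall_fin_two, mul_pos_iff, not_lt_of_gt]

theorem smul_rot_mem_quad_rPerm {s : SP} {w : Fin 2 → ℝ} (hw : w ∈ Quad s) {c : ℝ} (hc : 0 < c) :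
    c • rot w ∈ Quad (rPerm s) := by
  rcases s with ⟨_ | _, _ | _⟩ <;>
    simp_all [Quad, rot, rPerm, mul_pos_iff_of_pos_left, mul_neg_iff]

theorem smul_rot_mem_quad_rPermInv {s : SP} {w : Fin 2 → ℝ} (hw : w ∈ Quad s) {c : ℝ}
    (hc : c < 0) : c • rot w ∈ Quad (rPermInv s) := by
  rcases s with ⟨_ | _, _ | _⟩ <;>
    simp_all [Quad, rot, rPermInv, mul_pos_iff, mul_neg_iff]

/-! ### Shears -/

/-- The shear of the plane that adds `t` times the other coordinate to coordinate `i`.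
In `Fin 2` the other coordinate is `i + 1`. -/
def shear (i : Fin 2) (t : ℝ) (w : Fin 2 → ℝ) : Fin 2 → ℝ :=
  Function.update w i (w i + t * w (i + 1))

section Shear

variable {i j : Fin 2} {t t' : ℝ} {w z : Fin 2 → ℝ}

theorem shear_apply_self (i : Fin 2) (t : ℝ) (w : Fin 2 → ℝ) :
    shear i t w i = w i + t * w (i + 1) :=
  Function.update_self ..

theorem shear_apply_add_one (i : Fin 2) (t : ℝ) (w : Fin 2 → ℝ) :
    shear i t w (i + 1) = w (i + 1) :=
  Function.update_of_ne (by fin_cases i <;> decide) ..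

theorem shear_rot (i : Fin 2) (t : ℝ) (w : Fin 2 → ℝ) :
    shear (i + 1) (-t) (rot w) = rot (shear i t w) := by
  ext k
  fin_cases i <;> fin_cases k <;> simp [shear, rot, add_comm]

theorem dotProduct_self_shear_sub (i : Fin 2) (t : ℝ) (w : Fin 2 → ℝ) :
    shear i t w ⬝ᵥ shear i t w - w ⬝ᵥ w = shear i t w i ^ 2 - w i ^ 2 := by
  rw [dotProduct_self_eq_sq_add_sq i, dotProduct_self_eq_sq_add_sq i w, shear_apply_add_one]
  ring

theorem dotProduct_self_shear_le (h : |shear i t w i| ≤ |w i|) :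
    shear i t w ⬝ᵥ shear i t w ≤ w ⬝ᵥ w := by
  linarith [dotProduct_self_shear_sub i t w, sq_le_sq.2 h]

theorem nrm_shear_lt_iff : nrm (shear i t w) < nrm w ↔ |shear i t w i| < |w i| := by
  rw [nrm_eq_sqrt_dotProduct, nrm_eq_sqrt_dotProduct,
    Real.sqrt_lt_sqrt_iff (dotProduct_self_nonneg _), ← sq_lt_sq, ← sub_neg,
    dotProduct_self_shear_sub, sub_neg]

theorem mul_neg_and_abs_lt_of_abs_add_lt {x d : ℝ} (h : |x + d| < |x|) :
    x * d < 0 ∧ |d| < 2 * |x| := by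
  constructor
  · nlinarith [sq_lt_sq.2 h, sq_nonneg d]
  · have := abs_sub (x + d) x
    rw [add_sub_cancel_left] at this
    linarith

theorem abs_lt_or_mul_neg_of_abs_shear_lt (ht' : 2 ≤ |t'|) (hred : j = i → t' = t)
    (h : |shear j t' w j| < |w j|) :
    |w i| < |w (i + 1)| ∨ w i * (t * w (i + 1)) < 0 := by
  rw [shear_apply_self] at h
  obtain ⟨hneg, hlt⟩ := mul_neg_and_abs_lt_of_abs_add_lt h
  by_cases hji : j = i
  · obtain rfl := hji
    exact Or.inr (hred rfl ▸ hneg)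
  · obtain rfl : j = i + 1 := by omega
    obtain hi : i + 1 + 1 = i := by omega
    rw [hi, abs_mul] at hlt
    exact Or.inl (by nlinarith [abs_nonneg (w i)])

theorem abs_shear_lt_of_abs_lt_or_mul_neg (ht : 2 ≤ |t|)
    (h : |shear i t w i| < |w (i + 1)| ∨ shear i t w i * (t * w (i + 1)) < 0) :
    |shear i t w i| < |w i| := by
  have hw : w i = shear i t w i - t * w (i + 1) := by rw [shear_apply_self]; ring
  rcases h with hlt | hneg
  · have htri := abs_sub_abs_le_abs_sub (t * w (i + 1)) (shear i t w i)
    rw [abs_sub_comm, ← hw, abs_mul] at htri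
    nlinarith [abs_nonneg (w (i + 1))]
  · rw [← sq_lt_sq, hw]
    nlinarith [sq_nonneg (t * w (i + 1))]

theorem abs_le_abs_add_of_mul_nonneg {x p q d : ℝ} (hx : x ≠ 0) (hd : 0 ≤ x * d)
    (hqd : 2 * |q| ≤ |d|) (hp : 0 ≤ x * p ∨ |p| ≤ |q|) :
    0 ≤ x * (p + d) ∧ |q| ≤ |p + d| ∧ |p| ≤ |p + d| := by
  wlog hpos : 0 < x generalizing x p d
  · have hneg := this (x := -x) (p := -p) (d := -d) (neg_ne_zero.2 hx) (by linarith)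
      (by rwa [abs_neg]) (by rwa [neg_mul_neg, abs_neg]) (by grind)
    rwa [← neg_add, neg_mul_neg, abs_neg, abs_neg] at hneg
  have hd0 : 0 ≤ d := nonneg_of_mul_nonneg_right hd hpos
  rw [abs_of_nonneg hd0] at hqd
  have hpd : 0 ≤ p + d ∧ |q| ≤ p + d ∧ |p| ≤ p + d := by
    rcases hp with hp | hp
    · have hp0 : 0 ≤ p := nonneg_of_mul_nonneg_right hp hpos
      grind
    · grind
  rw [abs_of_nonneg hpd.1]
  exact ⟨mul_nonneg hpos.le hpd.1, hpd.2⟩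

theorem mul_pos_of_mul_neg_of_mul_neg {x y d : ℝ} (hx : x * d < 0) (hy : y * d < 0) :
    0 < x * y := by
  rcases mul_neg_iff.1 hx with ⟨hx, hd⟩ | ⟨hx, hd⟩
  · exact mul_pos hx (pos_of_mul_neg_left hy hd.le)
  · exact mul_pos_of_neg_of_neg hx (neg_of_mul_neg_left hy hd.le)

theorem mul_nonneg_of_mul_pos_of_mul_nonneg {x y z : ℝ} (hxy : 0 < x * y) (hz : 0 ≤ x * z) :
    0 ≤ y * z := by
  rcases mul_pos_iff.1 hxy with ⟨hx, hy⟩ | ⟨hx, hy⟩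
  · exact mul_nonneg hy.le (nonneg_of_mul_nonneg_right hz hx)
  · exact mul_nonneg_of_nonpos_of_nonpos hy.le (nonpos_of_mul_nonneg_right hz hx)

theorem mem_chamber_and_dotProduct_self_shear_le (ht : 2 ≤ |t|) (hw : |shear i t w i| < |w i|)
    (hsign : 0 ≤ w (i + 1) * z (i + 1))
    (hz : 0 ≤ w i * shear i t z i ∨ |shear i t z i| ≤ |z (i + 1)|) :
    z ∈ chamber w ∧ shear i t z ⬝ᵥ shear i t z ≤ z ⬝ᵥ z := by
  rw [shear_apply_self i t w] at hw
  obtain ⟨hneg, hlt⟩ := mul_neg_and_abs_lt_of_abs_add_lt hw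
  have hwi : w i ≠ 0 := left_ne_zero_of_mul hneg.ne
  have hd : 0 ≤ w i * -(t * z (i + 1)) := by
    have hwj : 0 < w (i + 1) ^ 2 := by
      have := right_ne_zero_of_mul (right_ne_zero_of_mul hneg.ne)
      positivity
    refine nonneg_of_mul_nonneg_left ?_ hwj
    nlinarith [mul_nonneg (neg_nonneg.2 hneg.le) hsign]
  have hqd : 2 * |z (i + 1)| ≤ |-(t * z (i + 1))| := by
    rw [abs_neg, abs_mul]
    gcongr
  have hzi : z i = shear i t z i + -(t * z (i + 1)) := by rw [shear_apply_self]; ring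
  obtain ⟨hzsign, hzord, hzle⟩ := abs_le_abs_add_of_mul_nonneg hwi hd hqd hz
  rw [← hzi] at hzsign hzord hzle
  have hword : |w (i + 1)| ≤ |w i| := by
    rw [abs_mul] at hlt
    nlinarith [abs_nonneg (w (i + 1))]
  refine ⟨(mem_chamber_iff i).2 ⟨hzsign, hsign, ?_⟩, dotProduct_self_shear_le hzle⟩
  exact mul_nonneg (sub_nonneg.2 (sq_le_sq.2 hword)) (sub_nonneg.2 (sq_le_sq.2 hzord))

theorem mem_chamber_of_shear_mem_chamber (ht : 2 ≤ |t|) (hw : |shear i t w i| < |w i|)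
    (hnext : |shear i t w i| < |w (i + 1)| ∨ shear i t w i * (t * w (i + 1)) < 0)
    (hz : shear i t z ∈ chamber (shear i t w)) :
    z ∈ chamber w ∧ shear i t z ⬝ᵥ shear i t z ≤ z ⬝ᵥ z := by
  obtain ⟨hself, hother, -⟩ := (mem_chamber_iff i).1 hz
  rw [shear_apply_add_one, shear_apply_add_one] at hother
  refine mem_chamber_and_dotProduct_self_shear_le ht hw hother ?_
  rcases hnext with hlt | hneg
  · right
    rw [← shear_apply_add_one i t w] at hlt
    simpa only [shear_apply_add_one] using abs_le_abs_of_mem_chamber hz hlt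
  · left
    rw [shear_apply_self i t w] at hw
    exact mul_nonneg_of_mul_pos_of_mul_nonneg
      (mul_pos_of_mul_neg_of_mul_neg hneg (mul_neg_and_abs_lt_of_abs_add_lt hw).1) hself

theorem mem_chamber_of_shear_mem_quadrant (ht : 2 ≤ |t|) (hw : |shear i t w i| < |w i|)
    (hcrit : ∀ k, 0 < shear i t w k * w k) (hz : ∀ k, 0 ≤ shear i t w k * shear i t z k) :
    z ∈ chamber w ∧ shear i t z ⬝ᵥ shear i t z ≤ z ⬝ᵥ z := by
  have hsign (k) : 0 ≤ w k * shear i t z k :=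
    mul_nonneg_of_mul_pos_of_mul_nonneg (hcrit k) (hz k)
  have hother := hsign (i + 1)
  rw [shear_apply_add_one] at hother
  exact mem_chamber_and_dotProduct_self_shear_le ht hw hother (Or.inl (hsign i))

end Shear

/-! ### Orbits of reduced sequences of shears -/

/-- `shear (axis n) (coeff n)`, `n = 0, 1, …`, is a sequence of shears with coefficients of absolute
value at least `2` in which shears along the same axis in succession are equal,
that is, no shear undoes part of the previous one. -/
structure IsReducedShearSeq (axis : ℕ → Fin 2) (coeff : ℕ → ℝ) : Prop where
  two_le_abs (n : ℕ) : 2 ≤ |coeff n|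
  coeff_succ (n : ℕ) : axis (n + 1) = axis n → coeff (n + 1) = coeff n

/-- `w` is obtained from `w 0` by applying the shears given by `axis` and `coeff` one by one. -/
def IsShearOrbit (axis : ℕ → Fin 2) (coeff : ℕ → ℝ) (w : ℕ → Fin 2 → ℝ) : Prop :=
  ∀ n, w (n + 1) = shear (axis n) (coeff n) (w n)

theorem exists_ge_succ_lt_of_forall_exists_lt {f : ℕ → ℝ} (hpos : ∀ n, 0 < f n)
    (hsmall : ∀ ε, 0 < ε → ∃ i, f i < ε) (m : ℕ) : ∃ n ≥ m, f (n + 1) < f n := by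
  by_contra! hincr
  obtain ⟨k, -, hmin⟩ := (Finset.range (m + 1)).exists_min_image f Finset.nonempty_range_add_one
  obtain ⟨i, hi⟩ := hsmall (f k) (hpos k)
  rcases le_or_gt i m with him | hmi
  · exact (hmin i (Finset.mem_range_succ_iff.2 him)).not_gt hi
  · have hmono : f m ≤ f i :=
      Nat.le_induction le_rfl (fun n hn ih => ih.trans (hincr n hn)) i hmi.le
    exact ((hmin m (Finset.self_mem_range_succ m)).trans hmono).not_gt hi

theorem tendsto_zero_of_antitone_of_forall_exists_lt {f : ℕ → ℝ} (hf : Antitone f)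
    (hpos : ∀ n, 0 ≤ f n) (hsmall : ∀ ε, 0 < ε → ∃ i, f i < ε) : Tendsto f atTop (𝓝 0) := by
  refine tendsto_atTop_isGLB hf ⟨Set.forall_mem_range.2 hpos, fun b hb => ?_⟩
  refine le_of_forall_pos_lt_add fun ε hε => ?_
  obtain ⟨i, hi⟩ := hsmall ε hε
  simpa using (hb (Set.mem_range_self i)).trans_lt hi

namespace IsShearOrbit

variable {axis : ℕ → Fin 2} {coeff : ℕ → ℝ} {w z : ℕ → Fin 2 → ℝ}

theorem nrm_succ_lt_iff (hw : IsShearOrbit axis coeff w) (n : ℕ) :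
    nrm (w (n + 1)) < nrm (w n) ↔
      |shear (axis n) (coeff n) (w n) (axis n)| < |w n (axis n)| := by
  rw [hw n, nrm_shear_lt_iff]

theorem abs_lt_or_mul_neg (hred : IsReducedShearSeq axis coeff) (hw : IsShearOrbit axis coeff w)
    {n : ℕ} (h : nrm (w (n + 2)) < nrm (w (n + 1))) :
    |shear (axis n) (coeff n) (w n) (axis n)| < |w n (axis n + 1)| ∨
      shear (axis n) (coeff n) (w n) (axis n) * (coeff n * w n (axis n + 1)) < 0 := by
  have h := abs_lt_or_mul_neg_of_abs_shear_lt (hred.two_le_abs (n + 1)) (hred.coeff_succ n)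
    ((hw.nrm_succ_lt_iff (n + 1)).1 h)
  rwa [hw n, shear_apply_add_one] at h

theorem strictAnti_nrm (hred : IsReducedShearSeq axis coeff) (hw : IsShearOrbit axis coeff w)
    (hpos : ∀ n, 0 < nrm (w n)) (hsmall : ∀ ε, 0 < ε → ∃ i, nrm (w i) < ε) :
    StrictAnti fun n => nrm (w n) := by
  refine strictAnti_nat_of_succ_lt fun m => ?_
  obtain ⟨n, hmn, hn⟩ := exists_ge_succ_lt_of_forall_exists_lt hpos hsmall m
  refine Nat.decreasingInduction (motive := fun k _ => nrm (w (k + 1)) < nrm (w k))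
    (fun k _ hk => ?_) hn hmn
  exact (hw.nrm_succ_lt_iff k).2
    (abs_shear_lt_of_abs_lt_or_mul_neg (hred.two_le_abs k) (hw.abs_lt_or_mul_neg hred hk))

theorem mem_chamber_of_succ (hred : IsReducedShearSeq axis coeff)
    (hw : IsShearOrbit axis coeff w) (hanti : StrictAnti fun n => nrm (w n))
    (hz : IsShearOrbit axis coeff z) {n : ℕ} (hmem : z (n + 1) ∈ chamber (w (n + 1))) :
    z n ∈ chamber (w n) ∧ z (n + 1) ⬝ᵥ z (n + 1) ≤ z n ⬝ᵥ z n := by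
  have hlt := (hw.nrm_succ_lt_iff n).1 (hanti n.lt_succ_self)
  have hnext := hw.abs_lt_or_mul_neg hred (hanti (n + 1).lt_succ_self)
  rw [hw n, hz n] at hmem
  rw [hz n]
  exact mem_chamber_of_shear_mem_chamber (hred.two_le_abs n) hlt hnext hmem

theorem mem_chamber_zero (hred : IsReducedShearSeq axis coeff)
    (hw : IsShearOrbit axis coeff w) (hanti : StrictAnti fun n => nrm (w n))
    (hz : IsShearOrbit axis coeff z) {n : ℕ} (hmem : z n ∈ chamber (w n)) :
    z 0 ∈ chamber (w 0) ∧ z n ⬝ᵥ z n ≤ z 0 ⬝ᵥ z 0 := by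
  induction n with
  | zero => exact ⟨hmem, le_rfl⟩
  | succ n ih =>
    obtain ⟨hmem', hle⟩ := mem_chamber_of_succ hred hw hanti hz hmem
    obtain ⟨hmem0, hle0⟩ := ih hmem'
    exact ⟨hmem0, hle.trans hle0⟩

theorem mem_chamber_of_critical (hred : IsReducedShearSeq axis coeff)
    (hw : IsShearOrbit axis coeff w) (hanti : StrictAnti fun n => nrm (w n))
    (hz : IsShearOrbit axis coeff z) {n : ℕ} (hcrit : ∀ k, 0 < w (n + 1) k * w n k)
    (hquad : ∀ k, 0 ≤ w (n + 1) k * z (n + 1) k) :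
    z n ∈ chamber (w n) ∧ z (n + 1) ⬝ᵥ z (n + 1) ≤ z n ⬝ᵥ z n := by
  have hlt := (hw.nrm_succ_lt_iff n).1 (hanti n.lt_succ_self)
  simp only [hw n, hz n] at hcrit hquad ⊢
  exact mem_chamber_of_shear_mem_quadrant (hred.two_le_abs n) hlt hcrit hquad

end IsShearOrbit

/-! ### The action of the free group -/

/-- The letter `h ^ ε` (for `i = 0`) or `v ^ ε` (for `i = 1`), indexed by the coordinate that
it changes. -/
def letter (i : Fin 2) (ε : ℤˣ) : F2 := (if i = 0 then gh else gv) ^ (ε : ℤ)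

section Action

variable (l : ℝ)

theorem act_one (x : Fin 2 → ℝ) : act l 1 x = x := by
  simp [act]

theorem act_mul (a b : F2) (x : Fin 2 → ℝ) : act l (a * b) x = act l a (act l b x) := by
  simp only [act, map_mul, Matrix.SpecialLinearGroup.coe_mul, Matrix.mulVec_mulVec]

theorem act_neg (g : F2) (x : Fin 2 → ℝ) : act l g (-x) = -act l g x :=
  Matrix.mulVec_neg ..

theorem act_smul (g : F2) (c : ℝ) (x : Fin 2 → ℝ) : act l g (c • x) = c • act l g x :=
  Matrix.mulVec_smul ..

theorem inv_hmat : (hmat l)⁻¹ = hmat (-l) :=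
  Subtype.ext <| by
    rw [Matrix.SpecialLinearGroup.coe_inv, Matrix.adjugate_fin_two]
    simp [hmat]

theorem inv_vmat : (vmat l)⁻¹ = vmat (-l) :=
  Subtype.ext <| by
    rw [Matrix.SpecialLinearGroup.coe_inv, Matrix.adjugate_fin_two]
    simp [vmat]

theorem hmat_mulVec (x : Fin 2 → ℝ) : (hmat l).val *ᵥ x = shear 0 l x := by
  ext k
  fin_cases k <;> simp [hmat, shear, Matrix.vecHead, Matrix.vecTail]

theorem vmat_mulVec (x : Fin 2 → ℝ) : (vmat l).val *ᵥ x = shear 1 l x := by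
  ext k
  fin_cases k <;> simp [vmat, shear, Matrix.vecHead, Matrix.vecTail, add_comm (x 1)]

theorem act_letter (i : Fin 2) (ε : ℤˣ) (x : Fin 2 → ℝ) :
    act l (letter i ε) x = shear i ((ε : ℤ) * l) x := by
  rcases Int.units_eq_one_or ε with rfl | rfl <;> fin_cases i <;>
    simp [act, letter, gh, gv, rho, inv_hmat, inv_vmat, hmat_mulVec, vmat_mulVec,
      -Matrix.mulVec_fin_two]

theorem letter_neg (i : Fin 2) (ε : ℤˣ) : letter i (-ε) = (letter i ε)⁻¹ := by
  rw [letter, letter, Units.val_neg, zpow_neg]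

theorem gammaAut_letter (i : Fin 2) (ε : ℤˣ) : gammaAut (letter i ε) = letter (i + 1) (-ε) := by
  fin_cases i <;> simp [letter, gammaAut, gh, gv]

theorem act_gammaAut_letter_rot (i : Fin 2) (ε : ℤˣ) (x : Fin 2 → ℝ) :
    act l (gammaAut (letter i ε)) (rot x) = rot (act l (letter i ε) x) := by
  simp [gammaAut_letter, act_letter, ← shear_rot]

theorem act_gammaAut_rot (g : F2) (x : Fin 2 → ℝ) :
    act l (gammaAut g) (rot x) = rot (act l g x) := by
  induction g using FreeGroup.induction_on generalizing x with
  | C1 => rw [map_one, act_one, act_one]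
  | of b =>
    cases b
    · simpa [letter, gv] using act_gammaAut_letter_rot l 1 1 x
    · simpa [letter, gh] using act_gammaAut_letter_rot l 0 1 x
  | inv_of b _ =>
    cases b
    · simpa [letter, gv] using act_gammaAut_letter_rot l 1 (-1) x
    · simpa [letter, gh] using act_gammaAut_letter_rot l 0 (-1) x
  | mul a b iha ihb => rw [map_mul, act_mul, act_mul, ihb, iha]

theorem act_gammaAut_dotProduct_act (g : F2) (u y : Fin 2 → ℝ) :
    act l (gammaAut g) u ⬝ᵥ act l g y = u ⬝ᵥ y := by
  obtain ⟨v, rfl⟩ : ∃ v, rot v = u := ⟨![u 1, -u 0], by ext k; fin_cases k <;> simp [rot]⟩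
  rw [act_gammaAut_rot]
  exact rot_mulVec_dotProduct_mulVec ..

theorem rot_act_dotProduct_act (g : F2) (x y : Fin 2 → ℝ) :
    rot (act l g x) ⬝ᵥ act l g y = rot x ⬝ᵥ y :=
  rot_mulVec_dotProduct_mulVec ..

end Action

theorem exists_letter_eq_of_mem_gens {a : F2} (ha : a ∈ gens) : ∃ i ε, letter i ε = a := by
  rcases ha with rfl | rfl | rfl | rfl
  · exact ⟨0, 1, by simp [letter]⟩
  · exact ⟨1, 1, by simp [letter]⟩
  · exact ⟨0, -1, by simp [letter]⟩
  · exact ⟨1, -1, by simp [letter]⟩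

theorem IsGeodesicRay.exists_isReducedShearSeq {g : ℕ → F2} (hg : IsGeodesicRay g) {l : ℝ}
    (hl : 2 ≤ |l|) : ∃ axis coeff, IsReducedShearSeq axis coeff ∧
      ∀ x, IsShearOrbit axis coeff fun n => act l (g n) x := by
  obtain ⟨-, hgens, hred⟩ := hg
  choose axis sign hletter using fun n => exists_letter_eq_of_mem_gens (hgens n)
  have hsucc (n) : g (n + 1) = letter (axis n) (sign n) * g n := by
    rw [hletter, inv_mul_cancel_right]
  refine ⟨axis, fun n => (sign n : ℤ) * l, ⟨fun n => ?_, fun n haxis => ?_⟩, fun x n => ?_⟩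
  · rcases Int.units_eq_one_or (sign n) with h | h <;> simpa [h] using hl
  · have hsign : sign (n + 1) ≠ -sign n := fun hneg => hred n <| by
      rw [hsucc (n + 1), hsucc n, haxis, hneg, letter_neg, inv_mul_cancel_left, mul_inv_cancel]
    rw [Ne, ← Int.units_ne_iff_eq_neg, not_not] at hsign
    rw [hsign]
  · simp only [hsucc n, act_mul, act_letter]

theorem act_gammaAut_dotProduct_pos_of_critical {l : ℝ} {axis : ℕ → Fin 2} {coeff : ℕ → ℝ}
    (hred : IsReducedShearSeq axis coeff) {g : ℕ → F2} (hg0 : g 0 = 1)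
    (horbit : ∀ x, IsShearOrbit axis coeff fun n => act l (g n) x) {x u z : Fin 2 → ℝ}
    (hanti : StrictAnti fun n => nrm (act l (g n) x)) (hxu : 0 < x ⬝ᵥ u) {n : ℕ}
    (hsmall : 2 * (u ⬝ᵥ u) * (act l (g (n + 1)) x ⬝ᵥ act l (g (n + 1)) x) < (x ⬝ᵥ u) ^ 2)
    (hcrit : ∀ k, 0 < act l (g (n + 1)) x k * act l (g n) x k) (hz0 : z ≠ 0)
    (hz : ∀ k, 0 ≤ act l (g (n + 1)) x k * z k) :
    0 < act l (gammaAut (g (n + 1))) u ⬝ᵥ z := by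
  obtain ⟨y, rfl⟩ : ∃ y, act l (g (n + 1)) y = z :=
    ⟨act l (g (n + 1))⁻¹ z, by rw [← act_mul, mul_inv_cancel, act_one]⟩
  have hy0 : y ≠ 0 := by
    rintro rfl
    exact hz0 (Matrix.mulVec_zero _)
  obtain ⟨hmem, hle⟩ := (horbit x).mem_chamber_of_critical hred hanti (horbit y) hcrit hz
  obtain ⟨hmem0, hle0⟩ := (horbit x).mem_chamber_zero hred hanti (horbit y) hmem
  simp only [hg0, act_one] at hmem0 hle0
  rw [act_gammaAut_dotProduct_act]
  exact dotProduct_pos_of_mem_chamber hmem0 hy0 (rot_act_dotProduct_act ..) (hle.trans hle0)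
    hxu hsmall

theorem eventually_act_gammaAut_mem_quad {l : ℝ} (hl : 2 ≤ |l|) {x u : Fin 2 → ℝ}
    {g : ℕ → F2} (hg : IsGeodesicRay g) (hgs : IsShrinkingSeq l g x)
    {s : ℕ → SP} (hs : ∀ i, act l (g i) x ∈ Quad (s i)) (hxu : 0 < x ⬝ᵥ u) :
    ∀ᶠ n in atTop, s n = s (n + 1) → act l (gammaAut (g (n + 1))) u ∈ Quad (s (n + 1)) := by
  obtain ⟨axis, coeff, hred, horbit⟩ := hg.exists_isReducedShearSeq hl
  have hpos (n) : 0 < nrm (act l (g n) x) := by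
    rw [nrm_eq_sqrt_dotProduct, Real.sqrt_pos]
    exact dotProduct_self_pos fun h => forall_ne_zero_of_mem_quad (hs n) 0 (congrFun h 0)
  have hanti := (horbit x).strictAnti_nrm hred hpos hgs
  have hsmall : ∀ᶠ n in atTop,
      2 * (u ⬝ᵥ u) * (act l (g (n + 1)) x ⬝ᵥ act l (g (n + 1)) x) < (x ⬝ᵥ u) ^ 2 := by
    have htendsto := tendsto_zero_of_antitone_of_forall_exists_lt hanti.antitone
      (fun n => (hpos n).le) hgs
    have hlim := ((htendsto.comp (tendsto_add_atTop_nat 1)).pow 2).const_mul (2 * (u ⬝ᵥ u))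
    simp only [Function.comp_apply, sq_nrm] at hlim
    exact hlim.eventually_lt_const (by simpa using sq_pos_of_pos hxu)
  filter_upwards [hsmall] with n hn hcrit
  have hsame := (mem_quad_iff_forall_mul_pos (hs (n + 1))).1 (hcrit ▸ hs n)
  refine (mem_quad_iff_forall_mul_pos (hs (n + 1))).2 fun k => ?_
  have hk := forall_ne_zero_of_mem_quad (hs (n + 1)) k
  -- pair with the projection of the shrunken vector to the `k`-th axis
  have hdot := act_gammaAut_dotProduct_pos_of_critical hred hg.1 horbit hanti hxu hn hsame
    (z := Pi.single k (act l (g (n + 1)) x k)) (by simpa using hk) fun j => by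
      rcases eq_or_ne j k with rfl | hjk
      · simpa using mul_self_nonneg _
      · simp [hjk]
  rwa [dotProduct_single, mul_comm] at hdot

theorem act_gammaAut_mem_quad_rPerm_or_rPermInv {l : ℝ} {x u : Fin 2 → ℝ} (hx : x ≠ 0)
    (hu : u ≠ 0) (hxu : x ⬝ᵥ u = 0) {g : ℕ → F2} {s : ℕ → SP}
    (hs : ∀ i, act l (g i) x ∈ Quad (s i)) :
    (∀ n, act l (gammaAut (g n)) u ∈ Quad (rPerm (s n))) ∨
      ∀ n, act l (gammaAut (g n)) u ∈ Quad (rPermInv (s n)) := by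
  obtain ⟨c, rfl⟩ := exists_smul_rot_eq hx hxu
  simp only [act_smul, act_gammaAut_rot]
  rcases (left_ne_zero_of_smul hu).lt_or_gt with hc | hc
  · exact Or.inr fun n => smul_rot_mem_quad_rPermInv (hs n) hc
  · exact Or.inl fun n => smul_rot_mem_quad_rPerm (hs n) hc

theorem stmt13_general {l : ℝ} (hl : 2 ≤ |l|) {x u : Fin 2 → ℝ} {g : ℕ → F2}
    (hg : IsGeodesicRay g) (hgs : IsShrinkingSeq l g x) {s : ℕ → SP}
    (hs : ∀ i, act l (g i) x ∈ Quad (s i)) (hu : u ≠ 0) :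
    (0 < x ⬝ᵥ u → ∃ i, ∀ n, i < n → 1 ≤ n → s (n - 1) = s n →
        act l (gammaAut (g n)) u ∈ Quad (s n)) ∧
    (x ⬝ᵥ u < 0 → ∃ i, ∀ n, i < n → 1 ≤ n → s (n - 1) = s n →
        -(act l (gammaAut (g n)) u) ∈ Quad (s n)) ∧
    (x ⬝ᵥ u = 0 →
      (∀ n, act l (gammaAut (g n)) u ∈ Quad (rPerm (s n))) ∨
      ∀ n, act l (gammaAut (g n)) u ∈ Quad (rPermInv (s n))) := by
  have hpositive {v : Fin 2 → ℝ} (hv : 0 < x ⬝ᵥ v) : ∃ i, ∀ n, i < n → 1 ≤ n →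
      s (n - 1) = s n → act l (gammaAut (g n)) v ∈ Quad (s n) := by
    obtain ⟨i, hi⟩ := eventually_atTop.1 (eventually_act_gammaAut_mem_quad hl hg hgs hs hv)
    refine ⟨i, fun n hin hn hcrit => ?_⟩
    obtain ⟨m, rfl⟩ := Nat.exists_eq_add_of_le' hn
    exact hi m (Nat.lt_succ_iff.1 hin) hcrit
  refine ⟨hpositive, fun hneg => ?_, ?_⟩
  · simpa only [act_neg] using hpositive (v := -u) (by rwa [dotProduct_neg, neg_pos])
  · have hx : x ≠ 0 := fun h => forall_ne_zero_of_mem_quad (hs 0) 0 (by simp [h, act])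
    exact fun hxu => act_gammaAut_mem_quad_rPerm_or_rPermInv hx hu hxu hs

theorem stmt13 (l : ℝ) (hl : 2 ≤ l) (x : Fin 2 → ℝ) (hx : x ∈ Circ)
    (hren : Renormalizable l x)
    (g : ℕ → F2) (hg : IsGeodesicRay g) (hgs : IsShrinkingSeq l g x)
    (s : ℕ → SP) (hs : ∀ i, act l (g i) x ∈ Quad (s i))
    (u : Fin 2 → ℝ) (hu : u ≠ 0) :
    (0 < x 0 * u 0 + x 1 * u 1 →
      ∃ i : ℕ, ∀ n : ℕ, i < n → 1 ≤ n → s (n - 1) = s n →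
        act l (gammaAut (g n)) u ∈ Quad (s n)) ∧
    (x 0 * u 0 + x 1 * u 1 < 0 →
      ∃ i : ℕ, ∀ n : ℕ, i < n → 1 ≤ n → s (n - 1) = s n →
        -(act l (gammaAut (g n)) u) ∈ Quad (s n)) ∧
    (x 0 * u 0 + x 1 * u 1 = 0 →
      (∀ n : ℕ, act l (gammaAut (g n)) u ∈ Quad (rPerm (s n))) ∨
      (∀ n : ℕ, act l (gammaAut (g n)) u ∈ Quad (rPermInv (s n)))) := by
  simpa only [Matrix.vec2_dotProduct] using
    stmt13_general (hl.trans (le_abs_self l)) hg hgs hs hu
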